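/- Let k > 2 be a fixed integer and let α ∈ (0,1) be the quadratic irrational whose partial quotients satisfy a_{2i−1} = 2 and a_{2i} = 2k for all i ≥ 1. Then limsup_{n→∞} n·D_n*(α)/log n > limsup_{n→∞} |d_n(α, 1/2)|/log n. -/

import Mathlib

open Filter Finset

noncomputable section

/-- The Gauss map `G(x) = {1/x}` (with `G(0) = 0`, since `0⁻¹ = 0` in Lean). -/
def gaussMap (x : ℝ) : ℝ := Int.fract x⁻¹

/-- `α_m = G^m(α)`. -/
def gaussIter (α : ℝ) (m : ℕ) : ℝ := gaussMap^[m] α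

/-- The `h`-th partial quotient `a_h` of `α` (meaningful for `h ≥ 1`):
`a_h = ⌊(G^{h-1} α)⁻¹⌋`. -/
def pq (α : ℝ) (h : ℕ) : ℕ := ⌊(gaussIter α (h - 1))⁻¹⌋₊

/-- Denominators `q_n` of the convergents of `α`:
`q_0 = 1`, `q_1 = a_1`, `q_{n+2} = a_{n+2} q_{n+1} + q_n`. -/
def qden (α : ℝ) : ℕ → ℕ
  | 0 => 1
  | 1 => pq α 1
  | (n + 2) => pq α (n + 2) * qden α (n + 1) + qden α n

/-- Numerators `p_n` of the convergents of `α`: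
`p_0 = 0`, `p_1 = 1`, `p_{n+2} = a_{n+2} p_{n+1} + p_n`. -/
def pnum (α : ℝ) : ℕ → ℕ
  | 0 => 0
  | 1 => 1
  | (n + 2) => pq α (n + 2) * pnum α (n + 1) + pnum α n

/-- `f_n = (-1)^n (q_n α - p_n)`. -/
def fseq (α : ℝ) (n : ℕ) : ℝ := (-1) ^ n * ((qden α n : ℝ) * α - (pnum α n : ℝ))

/-- `r_k = min {r ≥ 0 : ⌊r α⌋ = k}`. -/
def rmin (α : ℝ) (k : ℕ) : ℕ := sInf {r : ℕ | ⌊(r : ℝ) * α⌋ = (k : ℤ)}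

/-- `t_k = #{r ≥ 0 : ⌊r α⌋ = k}`. -/
def tcount (α : ℝ) (k : ℕ) : ℕ := Set.ncard {r : ℕ | ⌊(r : ℝ) * α⌋ = (k : ℤ)}

/-- `(k_j)_{j ≥ 0}`: the increasing enumeration of `{k : t_k = a_1 + 1}`. -/
def kseq (α : ℝ) (j : ℕ) : ℕ := Nat.nth (fun k => tcount α k = pq α 1 + 1) j

/-- The gaps `g_j = r_{k_j} - r_{k_{j-1}}` (for `j ≥ 1`). -/
def gseq (γ : ℝ) (j : ℕ) : ℕ := rmin γ (kseq γ j) - rmin γ (kseq γ (j - 1))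

/-- `(j_h)_{h ≥ 0}`: the increasing enumeration of those `j ≥ 1` with
`g_j = q_2 + q_1`. -/
def jbig (γ : ℝ) (h : ℕ) : ℕ :=
  Nat.nth (fun j => 1 ≤ j ∧ gseq γ j = qden γ 2 + qden γ 1) h

/-- `ᾱ_1 = G(α)/(1 - G(α))`. -/
def abar (α : ℝ) : ℝ := gaussIter α 1 / (1 - gaussIter α 1)

/-- The Ostrowski representation `r = ∑_{h=0}^N c_h q_h` with `0 ≤ c_h ≤ a_{h+1}`,
`c_{h-1} = 0` whenever `c_h = a_{h+1}`, and `c_N > 0`; `N = ord r`. -/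
def IsOstrowski (α : ℝ) (r N : ℕ) (c : ℕ → ℕ) : Prop :=
  r = ∑ h ∈ Finset.range (N + 1), c h * qden α h ∧
  (∀ h, c h ≤ pq α (h + 1)) ∧
  (∀ h, c (h + 1) = pq α (h + 2) → c h = 0) ∧
  0 < c N ∧ ∀ h, N < h → c h = 0

/-- The order `ord r` of a positive integer `r`. -/
def ordOst (α : ℝ) (r : ℕ) : ℕ := sInf {N | ∃ c, IsOstrowski α r N c}

/-- `s(y) = 2 χ_{[0,1/2)}({y}) - 1`. -/
def sfun (y : ℝ) : ℝ := if Int.fract y < 1 / 2 then 1 else -1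

/-- `S_n(α, β) = ∑_{r=0}^n s({r α + β})`. -/
def Sgen (α β : ℝ) (n : ℕ) : ℝ := ∑ r ∈ Finset.range (n + 1), sfun ((r : ℝ) * α + β)

/-- `S_n(α) = S_n(α, 0)`. -/
def Ssum (α : ℝ) (n : ℕ) : ℝ := Sgen α 0 n

/-- `max_{0 ≤ n ≤ r} S_n(α)`. -/
def maxS (α : ℝ) (r : ℕ) : ℝ := sSup (Ssum α '' Set.Iic r)

/-- `min_{0 ≤ n ≤ r} S_n(α)`. -/
def minS (α : ℝ) (r : ℕ) : ℝ := sInf (Ssum α '' Set.Iic r)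

/-- `d_n(α, β) = ∑_{r=0}^{n-1} χ_{[0,β)}({r α}) - β n`. -/
def ddisc (α β : ℝ) (n : ℕ) : ℝ :=
  (∑ r ∈ Finset.range n, if Int.fract ((r : ℝ) * α) < β then (1 : ℝ) else 0) - β * n

/-- `j(r) = max {j + sgn R₁ - 1, 0}` from the decomposition `r = r_{k_j} + R₁ q₁ + R₀`. -/
def jfun (j R1 : ℕ) : ℕ := if R1 = 0 then j - 1 else j

/-- `i(r) = k_j - j + max {R₁ - 1, 0}` from the decomposition `r = r_{k_j} + R₁ q₁ + R₀`. -/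
def ifun (α : ℝ) (j R1 : ℕ) : ℕ := kseq α j - j + (R1 - 1)

/-- `S̃(r)` from the decomposition `r = r_{k_j} + R₁ q₁ + R₀`. -/
def Stil (α : ℝ) (r R1 R0 : ℕ) : ℝ :=
  if R0 = 0 then (if R1 = 0 then sfun ((r : ℝ) * α) else 0)
  else if R1 = 0 then ∑ i ∈ Finset.Icc (r - R0) r, sfun ((i : ℝ) * α)
  else ∑ i ∈ Finset.Icc (r - R0 + 1) r, sfun ((i : ℝ) * α)

/-- `sup_{β ∈ (0,1)} |d_n(α, β)| = n D_n^*(α)`. -/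
def nDsup (α : ℝ) (n : ℕ) : ℝ := sSup ((fun β => |ddisc α β n|) '' Set.Ioo (0 : ℝ) 1)

/-- The discrepancy `D_n^*(α) = sup_{β ∈ (0,1)} |d_n(α, β)| / n`. -/
def Dstar (α : ℝ) (n : ℕ) : ℝ :=
  sSup ((fun β => |ddisc α β n| / (n : ℝ)) '' Set.Ioo (0 : ℝ) 1)


/-- floor sum -/
def Fs (ρ : ℝ) (n : ℕ) : ℝ := ∑ r ∈ Finset.range (n + 1), (⌊(r : ℝ) * ρ⌋₊ : ℝ)

lemma Fs_succ (ρ : ℝ) (n : ℕ) : Fs ρ (n + 1) = Fs ρ n + (⌊((n + 1 : ℕ) : ℝ) * ρ⌋₊ : ℝ) := by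
  unfold Fs; rw [Finset.sum_range_succ]

lemma Fs_zero (ρ : ℝ) : Fs ρ 0 = 0 := by simp [Fs]

lemma Fs_Icc (ρ : ℝ) (n : ℕ) : Fs ρ n = ∑ r ∈ Finset.Icc 1 n, (⌊(r : ℝ) * ρ⌋₊ : ℝ) := by
  induction n with
  | zero => simp [Fs]
  | succ n ih => rw [Fs_succ, ih, Finset.sum_Icc_succ_top (by omega)]

lemma floor_count (z : ℝ) (hz : 0 ≤ z) (M : ℕ) (hM : ⌊z⌋₊ ≤ M) :
    (⌊z⌋₊ : ℝ) = ∑ s ∈ Finset.Icc 1 M, if (s : ℝ) ≤ z then (1 : ℝ) else 0 := by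
  rw [Finset.sum_boole]
  have : (Finset.Icc 1 M).filter (fun s : ℕ => (s : ℝ) ≤ z) = Finset.Icc 1 ⌊z⌋₊ := by
    ext s
    simp only [Finset.mem_filter, Finset.mem_Icc, Nat.le_floor_iff hz]
    constructor
    · rintro ⟨⟨h1, _⟩, h3⟩; exact ⟨h1, h3⟩
    · rintro ⟨h1, h3⟩; exact ⟨⟨h1, (Nat.le_floor h3).trans hM⟩, h3⟩
  rw [this]; simp

lemma Fs_recip (ρ : ℝ) (hρ : 0 < ρ) (hirr : Irrational ρ) (n : ℕ) :
    Fs ρ n = n * (⌊(n : ℝ) * ρ⌋₊ : ℝ) - Fs ρ⁻¹ ⌊(n : ℝ) * ρ⌋₊ := by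
  set M := ⌊(n : ℝ) * ρ⌋₊ with hM
  rw [eq_sub_iff_add_eq, Fs_Icc, Fs_Icc]
  have e1 : ∀ r ∈ Finset.Icc 1 n, (⌊(r : ℝ) * ρ⌋₊ : ℝ) =
      ∑ s ∈ Finset.Icc 1 M, if (s : ℝ) ≤ r * ρ then (1 : ℝ) else 0 := by
    intro r hr
    apply floor_count _ (by positivity)
    apply Nat.floor_le_floor
    have : (r : ℝ) ≤ n := by exact_mod_cast (Finset.mem_Icc.1 hr).2
    gcongr
  have e2 : ∀ s ∈ Finset.Icc 1 M, (⌊(s : ℝ) * ρ⁻¹⌋₊ : ℝ) =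
      ∑ r ∈ Finset.Icc 1 n, if (r : ℝ) ≤ s * ρ⁻¹ then (1 : ℝ) else 0 := by
    intro s hs
    apply floor_count _ (by positivity)
    have h1 : (s : ℝ) ≤ M := by exact_mod_cast (Finset.mem_Icc.1 hs).2
    have h2 : (M : ℝ) ≤ n * ρ := Nat.floor_le (by positivity)
    apply Nat.floor_le_of_le
    rw [← div_eq_mul_inv, div_le_iff₀ hρ]; linarith
  rw [Finset.sum_congr rfl e1, Finset.sum_congr rfl e2, Finset.sum_comm (s := Finset.Icc 1 M),
    ← Finset.sum_add_distrib]
  have : ∀ r ∈ Finset.Icc 1 n, ((∑ s ∈ Finset.Icc 1 M, if (s : ℝ) ≤ r * ρ then (1 : ℝ) else 0) +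
      ∑ s ∈ Finset.Icc 1 M, if (r : ℝ) ≤ s * ρ⁻¹ then (1 : ℝ) else 0) = M := by
    intro r hr
    rw [← Finset.sum_add_distrib]
    have hr1 := (Finset.mem_Icc.1 hr).1
    have : ∀ s ∈ Finset.Icc 1 M, ((if (s : ℝ) ≤ r * ρ then (1 : ℝ) else 0) +
        if (r : ℝ) ≤ s * ρ⁻¹ then (1 : ℝ) else 0) = 1 := by
      intro s _
      have hne : (r : ℝ) * ρ ≠ s := (hirr.natCast_mul (by omega)).ne_nat s
      have : (r : ℝ) ≤ s * ρ⁻¹ ↔ (r : ℝ) * ρ ≤ s := by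
        rw [← div_eq_mul_inv, le_div_iff₀ hρ]
      rw [if_congr this rfl rfl]
      rcases lt_or_gt_of_ne hne with h | h
      · rw [if_neg (by linarith), if_pos h.le]; simp
      · rw [if_pos h.le, if_neg (by linarith)]; simp
    rw [Finset.sum_congr rfl this]; simp
  rw [Finset.sum_congr rfl this]; simp

lemma Fs_add (a : ℕ) (g : ℝ) (hg : 0 ≤ g) (n : ℕ) :
    Fs (a + g) n = a * (n * (n + 1) / 2) + Fs g n := by
  induction n with
  | zero => simp [Fs]
  | succ n ih =>
    rw [Fs_succ, Fs_succ, ih]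
    have : ((n + 1 : ℕ) : ℝ) * (a + g) = ((n + 1 : ℕ) : ℝ) * g + ((n + 1) * a : ℕ) := by
      push_cast; ring
    rw [this, Nat.floor_add_natCast (by positivity)]
    push_cast; ring

/-- two-step recursion -/
lemma Fs_two (ρ σ : ℝ) (a b : ℕ) (hρ : 0 < ρ) (hσ : 0 < σ) (hirr : Irrational ρ)
    (hirr' : Irrational σ) (e1 : ρ⁻¹ = a + σ) (e2 : σ⁻¹ = b + ρ) (n n' n'' : ℕ)
    (h' : ⌊(n : ℝ) * ρ⌋₊ = n') (h'' : ⌊(n' : ℝ) * σ⌋₊ = n'') :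
    Fs ρ n = n * n' - a * (n' * (n' + 1) / 2) - n' * n'' + b * (n'' * (n'' + 1) / 2) + Fs ρ n'' := by
  rw [Fs_recip ρ hρ hirr, h', e1, Fs_add _ _ hσ.le, Fs_recip σ hσ hirr', h'', e2, Fs_add _ _ hρ.le]
  ring

/-- The standing assumptions. -/
structure Ctx (k : ℕ) (α : ℝ) : Prop where
  hk : 2 < k
  irr : Irrational α
  pos : 0 < α
  eq : α * (2 * k + α) = k

/-- companion -/
def gam (k : ℕ) (α : ℝ) : ℝ := (2 * k + α)⁻¹

namespace Ctx
variable {k : ℕ} {α : ℝ}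

lemma hkR (h : Ctx k α) : (3 : ℝ) ≤ k := by exact_mod_cast h.hk

lemma lt_half (h : Ctx k α) : α < 1 / 2 := by
  by_contra hc
  nlinarith [h.eq, h.hkR, h.pos]

lemma gt (h : Ctx k α) : 0.464 < α := by
  by_contra hc
  nlinarith [h.eq, h.hkR, h.pos, h.lt_half]

lemma gpos (h : Ctx k α) : 0 < gam k α := by
  have := h.pos
  unfold gam; positivity

lemma gK (h : Ctx k α) : gam k α * (2 * k + α) = 1 := by
  have := h.pos
  unfold gam; field_simp

lemma kg (h : Ctx k α) : α = k * gam k α := by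
  have := h.gK
  have h2 := h.eq
  calc α = α * (gam k α * (2 * k + α)) := by rw [this]; ring
    _ = (α * (2 * k + α)) * gam k α := by ring
    _ = _ := by rw [h2]

lemma ag (h : Ctx k α) : α * (2 + gam k α) = 1 := by
  have h1 := h.gK
  have h2 := h.kg
  linear_combination h1 + 2 * h2

lemma girr (h : Ctx k α) : Irrational (gam k α) := by
  have h1 := h.irr
  rw [h.kg] at h1
  exact Irrational.of_natCast_mul k h1

lemma ne (h : Ctx k α) (a b : ℕ) (ha : a ≠ 0) : (a : ℝ) * α ≠ b :=
  (h.irr.natCast_mul ha).ne_nat b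

lemma inv_a (h : Ctx k α) : α⁻¹ = (2 : ℕ) + gam k α := by
  have := h.ag
  have h0 := h.pos
  field_simp
  push_cast
  linarith

lemma inv_g (h : Ctx k α) : (gam k α)⁻¹ = (2 * k : ℕ) + α := by
  unfold gam
  rw [inv_inv]; push_cast; ring

lemma inv_2a (h : Ctx k α) : (2 * α)⁻¹ = (1 : ℕ) + gam k α / 2 := by
  rw [mul_inv, h.inv_a]; push_cast; ring

lemma inv_g2 (h : Ctx k α) : (gam k α / 2)⁻¹ = (4 * k : ℕ) + 2 * α := by
  rw [inv_div, div_eq_mul_inv, h.inv_g]; push_cast; ring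

lemma recA (h : Ctx k α) (n n' n'' : ℕ)
    (h' : ⌊(n : ℝ) * α⌋₊ = n') (h'' : ⌊(n' : ℝ) * gam k α⌋₊ = n'') :
    Fs α n = n * n' - n' * (n' + 1) - n' * n'' + k * (n'' * (n'' + 1)) + Fs α n'' := by
  rw [Fs_two α (gam k α) 2 (2 * k) h.pos h.gpos h.irr h.girr h.inv_a h.inv_g n n' n'' h' h'']
  push_cast; ring

lemma recB (h : Ctx k α) (n n' n'' : ℕ)
    (h' : ⌊(n : ℝ) * (2 * α)⌋₊ = n') (h'' : ⌊(n' : ℝ) * (gam k α / 2)⌋₊ = n'') :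
    Fs (2 * α) n = n * n' - n' * (n' + 1) / 2 - n' * n'' + 2 * k * (n'' * (n'' + 1))
      + Fs (2 * α) n'' := by
  have i1 : Irrational (2 * α) := by
    have := h.irr.natCast_mul (m := 2) (by norm_num)
    simpa using this
  have i2 : Irrational (gam k α / 2) := by
    have := h.girr.div_natCast (m := 2) (by norm_num)
    simpa using this
  rw [Fs_two (2 * α) (gam k α / 2) 1 (4 * k) (by linarith [h.pos]) (by linarith [h.gpos])
    i1 i2 h.inv_2a h.inv_g2 n n' n'' h' h'']
  push_cast; ring

end Ctx

/-- potential -/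
def Pp (α : ℝ) (n : ℕ) : ℝ := if 1 / 2 ≤ Int.fract (((n : ℝ) + 1) * α) then 1 else 0

lemma Pp_range (α : ℝ) (n : ℕ) : Pp α n = 0 ∨ Pp α n = 1 := by
  unfold Pp; split_ifs <;> simp

lemma Pp_zero {α : ℝ} {n : ℕ} (m : ℤ) (f : ℝ) (e : ((n : ℝ) + 1) * α = m + f) (h0 : 0 ≤ f)
    (h1 : f < 1 / 2) : Pp α n = 0 := by
  unfold Pp
  rw [e, Int.fract_intCast_add, Int.fract_eq_self.2 ⟨h0, by linarith⟩, if_neg (by linarith)]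

lemma Pp_one {α : ℝ} {n : ℕ} (m : ℤ) (f : ℝ) (e : ((n : ℝ) + 1) * α = m + f) (h0 : 1 / 2 ≤ f)
    (h1 : f < 1) : Pp α n = 1 := by
  unfold Pp
  rw [e, Int.fract_intCast_add, Int.fract_eq_self.2 ⟨by linarith, h1⟩, if_pos h0]

/-- the sum `S_n` with the potential removed -/
def En (α : ℝ) (n : ℕ) : ℝ := (n + 1) + 4 * Fs α n - 2 * Fs (2 * α) n - Pp α n

set_option maxHeartbeats 2000000 in
lemma En_step {k : ℕ} {α : ℝ} (h : Ctx k α) (n n' n'' : ℕ) (hn : n ≠ 0)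
    (h' : ⌊(n : ℝ) * α⌋₊ = n') (h'' : ⌊(n' : ℝ) * gam k α⌋₊ = n'') :
    En α n = En α n'' ∨ En α n = En α n'' + 1 := by
  set g := gam k α with hg
  have ap := h.pos
  have gp := h.gpos
  have al := h.lt_half
  have ag := h.gt
  have hag : α * (2 + g) = 1 := h.ag
  have hgK : g * (2 * k + α) = 1 := h.gK
  have hk := h.hkR
  rw [← hg] at gp
  obtain ⟨x, hx⟩ : ∃ x, x = n * α - n' := ⟨_, rfl⟩
  obtain ⟨y, hy⟩ : ∃ y, y = n' * g - n'' := ⟨_, rfl⟩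
  have hF1 := (Nat.floor_eq_iff (by positivity)).1 h'
  have hF2 := (Nat.floor_eq_iff (by positivity)).1 h''
  have x0 : 0 < x := by
    rcases lt_or_eq_of_le hF1.1 with q | q
    · linarith
    · exact absurd q.symm (h.ne n n' hn)
  have x1 : x < 1 := by linarith
  have y0 : 0 ≤ y := by linarith
  have y1 : y < 1 := by linarith
  have xh : x ≠ 1 / 2 := by
    intro q
    apply h.ne (2 * n) (2 * n' + 1) (by omega)
    push_cast; linarith
  have yh : y ≠ 1 - g / 2 := by
    intro q
    apply h.ne (2 * n' + 1) (2 * k * (n'' + 1)) (by omega)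
    push_cast
    have := h.kg
    rw [← hg] at this
    rw [this]
    linear_combination 2 * (k : ℝ) * (q - hy)
  obtain ⟨u, hu⟩ : ∃ u : ℤ, u = n - 2 * n' - n'' := ⟨_, rfl⟩
  have huR : (u : ℝ) = n - 2 * n' - n'' := by rw [hu]; push_cast; ring
  have huxy : (u : ℝ) = y + x * (2 + g) := by
    rw [huR, hy, hx]; linear_combination -(n : ℝ) * hag
  obtain ⟨lam, hlam⟩ : ∃ l : ℝ, l = 4 * k + 2 * α + 1 := ⟨_, rfl⟩
  have lp : 0 < lam := by rw [hlam]; positivity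
  have hal : α * lam = 2 * k + α := by rw [hlam]; linear_combination 2 * h.eq
  have hl2 : (2 + g) * (2 * k + α) = lam := by rw [hlam]; linear_combination hgK
  have hn'' : ((n'' : ℝ) + 1) * α = n' - 2 * k * n'' - u * (2 * k + α) + x * lam + α := by
    rw [huxy, ← hl2, hy]; linear_combination (n' : ℝ) * hgK
  have hna : ((n : ℝ) + 1) * α = n' + (x + α) := by rw [hx]; ring
  have A := h.recA n n' n'' h' h''
  have g2p : 0 < 2 + g := by linarith
  have gl : g < 1 / 6 := by nlinarith
  have hxa : ∀ c : ℝ, x * (2 + g) < c ↔ x < c * α := by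
    intro c
    constructor
    · intro q
      have e := mul_lt_mul_of_pos_right q ap
      have e2 : x * (2 + g) * α = x := by linear_combination x * hag
      linarith
    · intro q
      have := mul_lt_mul_of_pos_right q g2p
      rw [mul_assoc, hag] at this; linarith
  have hxa' : ∀ c : ℝ, c ≤ x * (2 + g) ↔ c * α ≤ x := by
    intro c
    have := hxa c
    rw [← not_lt, ← not_lt, this]
  by_cases hx2 : x < 1 / 2
  · skip
    have hN' : ⌊(n : ℝ) * (2 * α)⌋₊ = 2 * n' := by
      rw [Nat.floor_eq_iff (by positivity)]; push_cast
      constructor <;> linarith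
    have hN'' : ⌊((2 * n' : ℕ) : ℝ) * (g / 2)⌋₊ = n'' := by
      rw [Nat.floor_eq_iff (by positivity)]; push_cast
      constructor <;> linarith
    have B := h.recB n _ _ hN' hN''
    push_cast at B
    have inc : En α n - En α n'' = u - Pp α n + Pp α n'' := by
      unfold En; rw [A, B, huR]; ring
    have u0 : 0 < u := by
      have : (0 : ℝ) < u := by rw [huxy]; positivity
      exact_mod_cast this
    have u3 : u < 3 := by
      have : (u : ℝ) < 3 := by rw [huxy]; linarith [(hxa 2).2 (by linarith)]
      exact_mod_cast this
    have : u = 1 ∨ u = 2 := by omega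
    rcases this with q | q
    · rw [q] at huxy inc hn''
      push_cast at huxy inc hn''
      have xla : x ≤ α := by
        by_contra hc
        have g2 : 0 < 2 + g := by linarith
        have := mul_lt_mul_of_pos_right (not_le.1 hc) g2
        linarith
      by_cases hc : x < 1 / 2 - α
      · have p1 : Pp α n = 0 := Pp_zero (n' : ℤ) (x + α) (by rw [hna]; push_cast; ring)
          (by linarith) (by linarith)
        have p2 : Pp α n'' = 0 := by
          apply Pp_zero ((n' : ℤ) - 2 * k * n'' - 2 * k) (x * lam)
          · rw [hn'']; push_cast; ring
          · positivity
          · have : x * lam < (1 / 2 - α) * lam := by gcongr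
            linarith
        right; rw [p1, p2] at inc; linarith
      · have p1 : Pp α n = 1 := Pp_one (n' : ℤ) (x + α) (by rw [hna]; push_cast; ring)
          (by linarith) (by linarith)
        rcases Pp_range α n'' with p2 | p2
        · left; rw [p1, p2] at inc; linarith
        · right; rw [p1, p2] at inc; linarith
    · rw [q] at huxy inc hn''
      push_cast at huxy inc hn''
      have xla : α ≤ x := by
        have := (hxa' 1).1 (by linarith)
        linarith
      have p1 : Pp α n = 1 := Pp_one (n' : ℤ) (x + α) (by rw [hna]; push_cast; ring)
          (by linarith) (by linarith)
      have p2 : Pp α n'' = 0 := by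
        apply Pp_zero ((n' : ℤ) - 2 * k * n'' - 2 * k) (x * lam - α - 2 * k)
        · rw [hn'']; push_cast; ring
        · have : α * lam ≤ x * lam := by gcongr
          linarith
        · have : x * lam < (1 / 2) * lam := by gcongr
          linarith
      right; rw [p1, p2] at inc; linarith
  · have hx2' : 1 / 2 < x := lt_of_le_of_ne (not_lt.1 hx2) (Ne.symm xh)
    have hN' : ⌊(n : ℝ) * (2 * α)⌋₊ = 2 * n' + 1 := by
      rw [Nat.floor_eq_iff (by positivity)]; push_cast
      constructor <;> linarith
    by_cases hy2 : y < 1 - g / 2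
    · have hN'' : ⌊((2 * n' + 1 : ℕ) : ℝ) * (g / 2)⌋₊ = n'' := by
        rw [Nat.floor_eq_iff (by positivity)]; push_cast
        constructor <;> linarith
      have B := h.recB n _ _ hN' hN''
      push_cast at B
      have inc : En α n - En α n'' = 2 - u - Pp α n + Pp α n'' := by
        unfold En; rw [A, B, huR]; ring
      have u0 : 1 < u := by
        have : (1 : ℝ) < u := by rw [huxy]; linarith [mul_lt_mul_of_pos_right hx2' g2p]
        exact_mod_cast this
      have u3 : u < 4 := by
        have : (u : ℝ) < 4 := by rw [huxy]; linarith [(hxa 3).2 (by linarith)]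
        exact_mod_cast this
      have : u = 2 ∨ u = 3 := by omega
      rcases this with q | q
      · rw [q] at huxy inc hn''
        push_cast at huxy inc hn''
        by_cases hc : x < 1 - α
        · have p1 : Pp α n = 1 := Pp_one (n' : ℤ) (x + α) (by rw [hna]; push_cast; ring)
            (by linarith) (by linarith)
          have p2 : Pp α n'' = 1 := by
            apply Pp_one ((n' : ℤ) - 2 * k * n'' - 2 * k) (x * lam - α - 2 * k)
            · rw [hn'']; push_cast; ring
            · have : (1 / 2) * lam < x * lam := by gcongr
              linarith
            · have : x * lam < (1 - α) * lam := by gcongr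
              linarith
          left; rw [p1, p2] at inc; linarith
        · have p1 : Pp α n = 0 := Pp_zero ((n' : ℤ) + 1) (x + α - 1)
            (by rw [hna]; push_cast; ring) (by linarith) (by linarith)
          rcases Pp_range α n'' with p2 | p2
          · left; rw [p1, p2] at inc; linarith
          · right; rw [p1, p2] at inc; linarith
      · rw [q] at huxy inc hn''
        push_cast at huxy inc hn''
        have xla : (2 + g / 2) * α ≤ x := (hxa' _).1 (by linarith)
        have p1 : Pp α n = 0 := Pp_zero ((n' : ℤ) + 1) (x + α - 1)
            (by rw [hna]; push_cast; ring) (by linarith [mul_pos gp ap]) (by linarith)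
        have p2 : Pp α n'' = 1 := by
          apply Pp_one ((n' : ℤ) - 2 * k * n'' - 2 * k) (x * lam - 2 * α - 4 * k)
          · rw [hn'']; push_cast; ring
          · have e1 : (2 + g / 2) * α * lam ≤ x * lam := by gcongr
            have e2 : (2 + g / 2) * α * lam = 2 * (2 * k + α) + 1 / 2 := by
              linear_combination (2 + g / 2) * hal + hgK / 2
            linarith
          · have : x * lam < 1 * lam := by gcongr
            linarith
        left; rw [p1, p2] at inc; linarith
    · have hy2' : 1 - g / 2 < y := lt_of_le_of_ne (not_lt.1 hy2) (Ne.symm yh)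
      have hN'' : ⌊((2 * n' + 1 : ℕ) : ℝ) * (g / 2)⌋₊ = n'' + 1 := by
        rw [Nat.floor_eq_iff (by positivity)]; push_cast
        constructor <;> linarith
      have B := h.recB n _ _ hN' hN''
      rw [Fs_succ] at B
      have key : ((n'' : ℝ) + 1) * (4 * k + 2 * α) = 2 * n' + (1 - y) * (4 * k + 2 * α) := by
        rw [hy]; linear_combination (2 * (n' : ℝ)) * hgK
      have b1 : 0 < (1 - y) * (4 * k + 2 * α) := by
        have : 0 < 1 - y := by linarith
        positivity
      have b2 : (1 - y) * (4 * k + 2 * α) < 1 := by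
        have : (1 - y) * (4 * k + 2 * α) < (g / 2) * (4 * k + 2 * α) := by
          have : 1 - y < g / 2 := by linarith
          gcongr
        linarith
      have hfl : (⌊((n'' + 1 : ℕ) : ℝ) * (2 * α)⌋₊ : ℝ) = 2 * n' - 4 * k * (n'' + 1) := by
        have hle : 4 * k * (n'' + 1) ≤ 2 * n' := by
          have h1 : ((n'' : ℝ) + 1) * (4 * k) < 2 * n' + 1 := by
            have : 0 < ((n'' : ℝ) + 1) * (2 * α) := by positivity
            linarith
          have : ((4 * k * (n'' + 1) : ℕ) : ℝ) < ((2 * n' + 1 : ℕ) : ℝ) := by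
            push_cast; linarith
          have := Nat.cast_lt.1 this
          omega
        have : ⌊((n'' + 1 : ℕ) : ℝ) * (2 * α)⌋₊ = 2 * n' - 4 * k * (n'' + 1) := by
          rw [Nat.floor_eq_iff (by positivity), Nat.cast_sub hle]; push_cast
          constructor <;> linarith
        rw [this, Nat.cast_sub hle]; push_cast; ring
      rw [hfl] at B
      push_cast at B
      have inc : En α n - En α n'' = 4 - u - Pp α n + Pp α n'' := by
        unfold En; rw [A, B, huR]; ring
      have u0 : 2 < u := by
        have : (2 : ℝ) < u := by rw [huxy]; linarith [mul_lt_mul_of_pos_right hx2' g2p]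
        exact_mod_cast this
      have u3 : u < 4 := by
        have : (u : ℝ) < 4 := by rw [huxy]; linarith [(hxa 3).2 (by linarith)]
        exact_mod_cast this
      have q : u = 3 := by omega
      rw [q] at huxy inc hn''
      push_cast at huxy inc hn''
      have p2 : Pp α n'' = 0 := by
        apply Pp_zero ((n' : ℤ) - 2 * k * n'' - 2 * k) (x * lam - 2 * α - 4 * k)
        · rw [hn'']; push_cast; ring
        · have : 2 * α ≤ x := (hxa' _).1 (by linarith)
          have : 2 * α * lam ≤ x * lam := by gcongr
          linarith
        · have e0 : x < (2 + g / 2) * α := (hxa _).1 (by linarith)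
          have e1 : x * lam < (2 + g / 2) * α * lam := by gcongr
          have e2 : (2 + g / 2) * α * lam = 2 * (2 * k + α) + 1 / 2 := by
            linear_combination (2 + g / 2) * hal + hgK / 2
          linarith
      rcases Pp_range α n with p1 | p1
      · right; rw [p1, p2] at inc; linarith
      · left; rw [p1, p2] at inc; linarith

/-- the growth factor -/
def lamb (k : ℕ) (α : ℝ) : ℝ := 4 * k + 2 * α + 1

lemma Ctx.lam_gt {k : ℕ} {α : ℝ} (h : Ctx k α) : 12 < lamb k α := by
  unfold lamb
  linarith [h.hkR, h.pos]

lemma Ctx.alam {k : ℕ} {α : ℝ} (h : Ctx k α) : α * lamb k α = 2 * k + α := by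
  unfold lamb; linear_combination 2 * h.eq

lemma En_zero {k : ℕ} {α : ℝ} (h : Ctx k α) : En α 0 = 1 := by
  have : Pp α 0 = 0 := Pp_zero 0 α (by simp) h.pos.le h.lt_half
  unfold En
  rw [this, Fs_zero, Fs_zero]; norm_num

lemma En_bound {k : ℕ} {α : ℝ} (h : Ctx k α) (n : ℕ) :
    1 ≤ En α n ∧ (n ≠ 0 → En α n ≤ 2 + Real.log n / Real.log (lamb k α)) := by
  induction n using Nat.strong_induction_on with
  | _ n ih =>
    rcases eq_or_ne n 0 with rfl | hn
    · simp [En_zero h]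
    have hl := h.lam_gt
    have hlog : 0 < Real.log (lamb k α) := Real.log_pos (by linarith)
    obtain ⟨n', hn'⟩ : ∃ n', ⌊(n : ℝ) * α⌋₊ = n' := ⟨_, rfl⟩
    obtain ⟨m, hm⟩ : ∃ m, ⌊(n' : ℝ) * gam k α⌋₊ = m := ⟨_, rfl⟩
    have b1 : (n' : ℝ) ≤ n * α := by
      rw [← hn']; exact Nat.floor_le (mul_nonneg (Nat.cast_nonneg _) h.pos.le)
    have b2 : (m : ℝ) ≤ n' * gam k α := by
      rw [← hm]; exact Nat.floor_le (mul_nonneg (Nat.cast_nonneg _) h.gpos.le)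
    have b3 : (m : ℝ) * lamb k α ≤ n := by
      calc (m : ℝ) * lamb k α ≤ (n * α * gam k α) * lamb k α := by
            have := h.gpos
            gcongr
            exact b2.trans (by gcongr)
        _ = n * (gam k α * (α * lamb k α)) := by ring
        _ = n := by rw [h.alam, h.gK]; ring
    have hnpos : (0 : ℝ) < n := by exact_mod_cast Nat.pos_of_ne_zero hn
    have mn : m < n := by
      have : (m : ℝ) < n := by
        have : (0 : ℝ) ≤ m := Nat.cast_nonneg _
        nlinarith
      exact_mod_cast this
    have st := En_step h n n' m hn hn' hm
    obtain ⟨i1, i2⟩ := ih m mn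
    refine ⟨by rcases st with s | s <;> linarith, fun _ => ?_⟩
    have hup : En α n ≤ En α m + 1 := by rcases st with s | s <;> linarith
    rcases eq_or_ne m 0 with rfl | hm0
    · rw [En_zero h] at hup
      have : 0 ≤ Real.log n := Real.log_natCast_nonneg n
      have : 0 ≤ Real.log n / Real.log (lamb k α) := by positivity
      linarith
    · have := i2 hm0
      have hmpos : (0 : ℝ) < m := by exact_mod_cast Nat.pos_of_ne_zero hm0
      have e : Real.log m + Real.log (lamb k α) ≤ Real.log n := by
        rw [← Real.log_mul hmpos.ne' (by linarith)]
        exact Real.log_le_log (by positivity) b3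
      have : Real.log m / Real.log (lamb k α) + 1 ≤ Real.log n / Real.log (lamb k α) := by
        rw [div_add_one hlog.ne']
        gcongr
      linarith

lemma half_ind (y : ℝ) (hy : 0 ≤ y) : (if Int.fract y < 1 / 2 then (1 : ℝ) else 0) =
    1 + 2 * (⌊y⌋₊ : ℝ) - (⌊2 * y⌋₊ : ℝ) := by
  have e0 : Int.fract y = y - ⌊y⌋₊ := by
    rw [Int.fract, natCast_floor_eq_intCast_floor hy]
  have h1 := Nat.floor_le hy
  have h2 := Nat.lt_floor_add_one y
  split_ifs with c
  · have : ⌊2 * y⌋₊ = 2 * ⌊y⌋₊ := by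
      rw [Nat.floor_eq_iff (by positivity)]; push_cast; constructor <;> linarith
    rw [this]; push_cast; ring
  · have : ⌊2 * y⌋₊ = 2 * ⌊y⌋₊ + 1 := by
      rw [Nat.floor_eq_iff (by positivity)]; push_cast; constructor <;> linarith
    rw [this]; push_cast; ring

lemma ddisc_half {k : ℕ} {α : ℝ} (h : Ctx k α) (n : ℕ) :
    ddisc α (1 / 2) (n + 1) = (En α n + Pp α n) / 2 := by
  unfold ddisc En Fs
  have : ∀ r ∈ Finset.range (n + 1), (if Int.fract ((r : ℝ) * α) < 1 / 2 then (1 : ℝ) else 0) =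
      1 + 2 * (⌊(r : ℝ) * α⌋₊ : ℝ) - (⌊(r : ℝ) * (2 * α)⌋₊ : ℝ) := by
    intro r _
    rw [half_ind _ (mul_nonneg (Nat.cast_nonneg _) h.pos.le)]
    rw [show 2 * ((r : ℝ) * α) = (r : ℝ) * (2 * α) by ring]
  rw [Finset.sum_congr rfl this, Finset.sum_sub_distrib, Finset.sum_add_distrib, ← Finset.mul_sum]
  simp
  ring

lemma half_bound {k : ℕ} {α : ℝ} (h : Ctx k α) (n : ℕ) (hn : 2 ≤ n) :
    |ddisc α (1 / 2) n| ≤ (3 + Real.log n / Real.log (lamb k α)) / 2 := by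
  obtain ⟨m, rfl⟩ : ∃ m, n = m + 1 := ⟨n - 1, by omega⟩
  rw [ddisc_half h]
  have hlog : 0 < Real.log (lamb k α) := Real.log_pos (by linarith [h.lam_gt])
  obtain ⟨e1, e2⟩ := En_bound h m
  have e2 := e2 (by omega)
  have hm : (0 : ℝ) < m := by
    have : 0 < m := by omega
    exact_mod_cast this
  have : Real.log m ≤ Real.log ((m + 1 : ℕ) : ℝ) :=
    Real.log_le_log hm (by push_cast; linarith)
  have : Real.log m / Real.log (lamb k α) ≤ Real.log ((m + 1 : ℕ) : ℝ) / Real.log (lamb k α) := by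
    gcongr
  rw [abs_le]
  rcases Pp_range α m with p | p <;> rw [p] <;> constructor <;> linarith

/-- sawtooth sum -/
def Tn (α : ℝ) (n : ℕ) : ℝ := α * (n * (n + 1) / 2) - Fs α n - (n + 1) / 2

set_option maxHeartbeats 1000000 in
lemma Tn_step {k : ℕ} {α : ℝ} (h : Ctx k α) (N : ℕ) :
    ∃ n : ℕ, N < n ∧ ((n : ℝ) + 1 ≤ lamb k α * (N + 1)) ∧ Tn α N + 0.52 ≤ Tn α n := by
  have ap := h.pos
  have gp := h.gpos
  have al := h.lt_half
  have ag := h.gt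
  have hag := h.ag
  have hgK := h.gK
  have hk := h.hkR
  set g := gam k α with hg
  have f1 : (⌊(N : ℝ) * α⌋₊ : ℝ) ≤ N * α := Nat.floor_le (by positivity)
  have f2 := Nat.lt_floor_add_one ((N : ℝ) * α)
  obtain ⟨j, hj⟩ : ∃ j, ⌊(N : ℝ) * α⌋₊ = j := ⟨_, rfl⟩
  rw [hj] at f1 f2
  obtain ⟨s, hs⟩ : ∃ s, s = N * α - j := ⟨_, rfl⟩
  obtain ⟨n', hn'⟩ : ∃ n', n' = 2 * k * N + j + k + 1 := ⟨_, rfl⟩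
  obtain ⟨n, hn⟩ : ∃ n, n = 2 * n' + N + 2 := ⟨_, rfl⟩
  have hn'R : (n' : ℝ) = 2 * k * N + j + k + 1 := by rw [hn']; push_cast; ring
  have hnR : (n : ℝ) = 2 * n' + N + 2 := by rw [hn]; push_cast; ring
  obtain ⟨K, hK⟩ : ∃ K : ℝ, K = 2 * k + α := ⟨_, rfl⟩
  rw [← hK] at hgK
  obtain ⟨y, hy⟩ : ∃ y, y = n' * g - N := ⟨_, rfl⟩
  have hKp : 0 < K := by rw [hK]; positivity
  have hn'K : (n' : ℝ) = K * (N + y) := by rw [hy]; linear_combination -(n' : ℝ) * hgK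
  have hw : K * y = k + 1 - s := by
    have : K * y = n' - K * N := by rw [hn'K]; ring
    rw [this, hn'R, hs, hK]; ring
  have y0 : 0 ≤ y := by
    have : 0 ≤ K * y := by rw [hw]; linarith
    exact nonneg_of_mul_nonneg_right this hKp
  have y1 : y ≤ 0.62 := by
    by_contra hc
    have : K * 0.62 < K * y := by
      have := not_le.1 hc
      gcongr
    rw [hw, hK] at this
    linarith
  have hr : α * (2 * K + 1) = K := by rw [hK]; linear_combination 2 * h.eq
  have hxx : (n : ℝ) * α - n' = α * (2 - y) := by
    rw [hnR, hn'K]; linear_combination (N + y) * hr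
  have fl1 : ⌊(n : ℝ) * α⌋₊ = n' := by
    rw [Nat.floor_eq_iff (by positivity)]
    constructor
    · have : 0 ≤ α * (2 - y) := mul_nonneg ap.le (by linarith)
      linarith
    · have : α * (2 - y) < 1 := by nlinarith
      linarith
  have fl2 : ⌊(n' : ℝ) * g⌋₊ = N := by
    rw [Nat.floor_eq_iff (by positivity)]
    constructor <;> linarith
  have A := h.recA n n' N fl1 fl2
  have hkK : (k : ℝ) = (K - α) / 2 := by rw [hK]; ring
  have inc : Tn α n - Tn α N = α * ((2 - y) * (3 - y)) / 2 + K * y * (1 - y) / 2 - 1 := by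
    unfold Tn
    rw [A, hkK, hnR, hn'K]
    linear_combination ((N + y) * (5 - 2 * y + (2 * K + 1) * (N + y)) / 2) * hr
  refine ⟨n, by omega, ?_, ?_⟩
  · unfold lamb
    rw [hnR, hn'R]; nlinarith
  · have t1 : 1.52 ≤ α * ((2 - y) * (3 - y)) := by
      have : 3.284 ≤ (2 - y) * (3 - y) := by nlinarith
      nlinarith
    have t2 : 1.52 ≤ K * y * (1 - y) := by
      have e : K * (K * y * (1 - y)) = (k + 1 - s) * (k - 1 + α + s) := by
        have : K * (K * y * (1 - y)) = (K * y) * (K - K * y) := by ring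
        rw [this, hw, hK]; ring
      have e2 : 1.52 * K ≤ (k + 1 - s) * (k - 1 + α + s) := by
        have s0 : 0 ≤ s := by linarith
        have s1 : s < 1 := by linarith
        have : 0 ≤ s * (2 - α - s) := mul_nonneg s0 (by linarith)
        have e3 : (k + 1 - s) * (k - 1 + α + s) = (k : ℝ) ^ 2 - 1 + α * (k + 1) + s * (2 - α - s) := by
          ring
        rw [e3, hK]
        have e4 : 0.464 * (k - 0.52) ≤ α * ((k : ℝ) - 0.52) := by
          have : (0 : ℝ) ≤ k - 0.52 := by linarith
          gcongr
        nlinarith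
      rw [← e, mul_comm] at e2
      exact le_of_mul_le_mul_left e2 hKp
    linarith

lemma Tn_seq {k : ℕ} {α : ℝ} (h : Ctx k α) (m : ℕ) :
    ∃ n : ℕ, m ≤ n ∧ ((n : ℝ) + 1 ≤ lamb k α ^ m) ∧ 0.52 * m - 1 / 2 ≤ Tn α n := by
  induction m with
  | zero => exact ⟨0, le_rfl, by simp, by simp [Tn, Fs_zero]⟩
  | succ m ih =>
    obtain ⟨N, h1, h2, h3⟩ := ih
    obtain ⟨n, g1, g2, g3⟩ := Tn_step h N
    refine ⟨n, by omega, ?_, ?_⟩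
    · rw [pow_succ, mul_comm]
      refine g2.trans ?_
      have := h.lam_gt
      gcongr
    · push_cast; linarith

/-- inhomogeneous sawtooth sum -/
def Rs (α : ℝ) (n : ℕ) (z : ℝ) : ℝ := ∑ r ∈ Finset.range n, (Int.fract (z + r * α) - 1 / 2)

lemma Rs_add (α : ℝ) (a b : ℕ) (z : ℝ) : Rs α (a + b) z = Rs α a z + Rs α b (z + a * α) := by
  unfold Rs
  rw [Finset.sum_range_add]
  congr 1
  apply Finset.sum_congr rfl
  intro r _
  push_cast
  congr 2; ring

lemma fract_near (q b : ℕ) (hb : b < q) (η : ℝ) (h1 : -1 < η) (h2 : η < 2) (t : ℤ) (w : ℝ)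
    (hw : w = t + (b + η) / q) :
    |Int.fract w - b / q| ≤ 2 / q + (if b = 0 then 1 else 0) + (if b = q - 1 then 1 else 0) := by
  have hq : (0 : ℝ) < q := by exact_mod_cast (by omega : 0 < q)
  have hbq : (b : ℝ) / q < 1 := by rw [div_lt_one hq]; exact_mod_cast hb
  have hb0 : (0 : ℝ) ≤ (b : ℝ) / q := by positivity
  have f0 := Int.fract_nonneg w
  have f1 := Int.fract_lt_one w
  have q2 : (0 : ℝ) < 2 / q := by positivity
  by_cases c1 : b = 0
  · rw [if_pos c1]
    have : (0 : ℝ) ≤ if b = q - 1 then 1 else 0 := by split_ifs <;> norm_num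
    rw [abs_le]; constructor <;> linarith
  by_cases c2 : b = q - 1
  · rw [if_pos c2, if_neg c1]
    rw [abs_le]; constructor <;> linarith
  rw [if_neg c1, if_neg c2, hw, Int.fract_intCast_add]
  have b1 : (1 : ℝ) ≤ b := by exact_mod_cast Nat.one_le_iff_ne_zero.2 c1
  have b2 : (b : ℝ) + 2 ≤ q := by exact_mod_cast (by omega : b + 2 ≤ q)
  rw [Int.fract_eq_self.2 ⟨div_nonneg (by linarith) hq.le, (div_lt_one hq).2 (by linarith)⟩]
  rw [← sub_div, add_sub_cancel_left, abs_div, abs_of_pos hq, add_zero, add_zero]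
  gcongr
  rw [abs_le]; constructor <;> linarith

lemma block (α : ℝ) (a : ℚ) (n : ℕ) (ha : |α - a| ≤ 1 / ((n + 1) * a.den)) (hn : a.den ≤ n)
    (z : ℝ) : |Rs α a.den z| ≤ 5 := by
  obtain ⟨q, hq⟩ : ∃ q, q = a.den := ⟨_, rfl⟩
  obtain ⟨p, hp⟩ : ∃ p, p = a.num := ⟨_, rfl⟩
  have hcop : IsCoprime p (q : ℤ) := by
    rw [hp, hq, Int.isCoprime_iff_gcd_eq_one]
    have := a.reduced
    rw [Nat.Coprime] at this
    simpa [Int.gcd] using this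
  have haR : (a : ℝ) = p / q := by rw [hp, hq]; exact Rat.cast_def a
  rw [← hq] at ha hn ⊢
  have q0 : 0 < q := by rw [hq]; exact a.den_pos
  have hqR : (0 : ℝ) < q := by exact_mod_cast q0
  set m : ℤ := ⌊z * q⌋ with hm
  let bf : ℕ → ℕ := fun r => ((m + r * p) % (q : ℤ)).toNat
  have bfZ : ∀ r, ((bf r : ℕ) : ℤ) = (m + r * p) % (q : ℤ) := fun r =>
    Int.toNat_of_nonneg (Int.emod_nonneg _ (by omega))
  have bflt : ∀ r, bf r < q := by
    intro r
    have := bfZ r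
    have := Int.emod_lt_of_pos (m + r * p) (show (0 : ℤ) < q by omega)
    omega
  have inj : Set.InjOn bf (Finset.range q) := by
    intro r hr r' hr' e
    simp only [Finset.coe_range, Set.mem_Iio] at hr hr'
    have e' : (m + r * p) % (q : ℤ) = (m + r' * p) % (q : ℤ) := by
      rw [← bfZ, ← bfZ, e]
    have d : (q : ℤ) ∣ ((r : ℤ) - r') * p := by
      have := Int.emod_emod_of_dvd
      have := (Int.emod_eq_emod_iff_emod_sub_eq_zero).1 e'
      have := Int.dvd_of_emod_eq_zero this
      convert this using 1; ring
    have d2 : (q : ℤ) ∣ (r : ℤ) - r' := hcop.symm.dvd_of_dvd_mul_right d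
    have : (r : ℤ) - r' = 0 := Int.eq_zero_of_abs_lt_dvd d2 (by rw [abs_lt]; omega)
    omega
  have img : (Finset.range q).image bf = Finset.range q := by
    apply Finset.eq_of_subset_of_card_le
    · intro x hx
      obtain ⟨r, _, rfl⟩ := Finset.mem_image.1 hx
      exact Finset.mem_range.2 (bflt r)
    · rw [Finset.card_image_of_injOn inj]
  have resum : ∀ G : ℕ → ℝ, ∑ r ∈ Finset.range q, G (bf r) = ∑ b ∈ Finset.range q, G b := by
    intro G
    conv_rhs => rw [← img]
    rw [Finset.sum_image inj]
  have pt : ∀ r ∈ Finset.range q, |Int.fract (z + r * α) - (bf r : ℝ) / q| ≤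
      (fun b : ℕ => 2 / (q : ℝ) + (if b = 0 then 1 else 0) + (if b = q - 1 then 1 else 0)) (bf r) := by
    intro r hr
    have hr' : (r : ℝ) < q := by exact_mod_cast Finset.mem_range.1 hr
    have hdiff : |(r : ℝ) * q * (α - a)| < 1 := by
      rw [abs_mul, abs_of_nonneg (by positivity)]
      calc (r : ℝ) * q * |α - a| ≤ r * q * (1 / ((n + 1) * q)) := by gcongr
        _ = r / (n + 1) := by field_simp
        _ < 1 := by
          rw [div_lt_one (by positivity)]
          have : (q : ℝ) ≤ n := by exact_mod_cast hn
          linarith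
    rw [abs_lt] at hdiff
    have e0 := Int.fract_nonneg (z * q)
    have e1 := Int.fract_lt_one (z * q)
    apply fract_near q (bf r) (bflt r) (Int.fract (z * q) + r * q * (α - a)) (by linarith)
      (by linarith) ((m + r * p) / (q : ℤ))
    have key : ((bf r : ℕ) : ℝ) = m + r * p - q * ((m + r * p) / (q : ℤ) : ℤ) := by
      have := bfZ r
      rw [Int.emod_def] at this
      exact_mod_cast this
    rw [key, haR, Int.fract, ← hm]
    field_simp
    ring
  have s1 : ∑ b ∈ Finset.range q, (2 / (q : ℝ) + (if b = 0 then 1 else 0) + (if b = q - 1 then 1 else 0))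
      = 4 := by
    rw [Finset.sum_add_distrib, Finset.sum_add_distrib, Finset.sum_ite_eq', Finset.sum_ite_eq',
      if_pos (Finset.mem_range.2 q0), if_pos (Finset.mem_range.2 (by omega))]
    simp
    field_simp
    norm_num
  have s2 : ∑ b ∈ Finset.range q, ((b : ℝ) / q - 1 / 2) = -1 / 2 := by
    rw [Finset.sum_sub_distrib, ← Finset.sum_div]
    have : ∀ n : ℕ, ∑ b ∈ Finset.range n, (b : ℝ) = n * (n - 1) / 2 := by
      intro n
      induction n with
      | zero => simp
      | succ n ih => rw [Finset.sum_range_succ, ih]; push_cast; ring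
    rw [this]
    simp
    field_simp
    ring
  have : Rs α q z = ∑ r ∈ Finset.range q, (Int.fract (z + r * α) - (bf r : ℝ) / q) + -1 / 2 := by
    rw [← s2, ← resum (fun b => (b : ℝ) / q - 1 / 2), ← Finset.sum_add_distrib]
    unfold Rs
    apply Finset.sum_congr rfl
    intro r _; ring
  rw [this]
  have h4 : |∑ r ∈ Finset.range q, (Int.fract (z + r * α) - (bf r : ℝ) / q)| ≤ 4 := by
    refine (Finset.abs_sum_le_sum_abs _ _).trans ((Finset.sum_le_sum pt).trans ?_)
    exact ((resum (fun b : ℕ => 2 / (q : ℝ) + (if b = 0 then 1 else 0) + (if b = q - 1 then 1 else 0))).trans s1).le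
  rw [abs_le] at h4 ⊢
  constructor <;> linarith

lemma den_large {k : ℕ} {α : ℝ} (h : Ctx k α) (a : ℚ) (n : ℕ)
    (ha : |α - a| ≤ 1 / ((n + 1) * a.den)) : (n : ℝ) / (2 * k + 3) ≤ a.den := by
  obtain ⟨q, hq⟩ : ∃ q, q = a.den := ⟨_, rfl⟩
  obtain ⟨p, hp⟩ : ∃ p, p = a.num := ⟨_, rfl⟩
  have haR : (a : ℝ) = p / q := by rw [hp, hq]; exact Rat.cast_def a
  rw [← hq] at ha ⊢
  have q0 : 0 < q := by rw [hq]; exact a.den_pos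
  have hqR : (1 : ℝ) ≤ q := by exact_mod_cast q0
  have ap := h.pos
  have al := h.lt_half
  have hn0 : (0 : ℝ) ≤ n := Nat.cast_nonneg _
  have hk := h.hkR
  have d : |q * α - p| * (n + 1) ≤ 1 := by
    have e : q * α - p = q * (α - a) := by rw [haR]; field_simp
    rw [e, abs_mul, abs_of_pos (by linarith)]
    calc (q : ℝ) * |α - a| * (n + 1) ≤ q * (1 / ((n + 1) * q)) * (n + 1) := by gcongr
      _ = 1 := by field_simp
  have fac : (q * α - p) * (p + q * (2 * k + α)) = ((k * q ^ 2 - p ^ 2 - 2 * k * p * q : ℤ) : ℝ) := by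
    push_cast; linear_combination (q : ℝ) ^ 2 * h.eq
  have d1 : |q * α - p| ≤ 1 := by
    have := abs_nonneg (q * α - p)
    nlinarith
  have hne : q * α - p ≠ 0 := by
    intro e
    have := (h.irr.natCast_mul (m := q) (by omega)).ne_int p
    apply this; linarith
  rw [abs_le] at d1
  have hpos : 0 < p + q * (2 * k + α) := by nlinarith
  have hint : (1 : ℝ) ≤ |(q * α - p) * (p + q * (2 * k + α))| := by
    have hnz := mul_ne_zero hne hpos.ne'
    rw [fac] at hnz ⊢
    have : (k * q ^ 2 - p ^ 2 - 2 * k * p * q : ℤ) ≠ 0 := by exact_mod_cast hnz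
    have := Int.one_le_abs this
    exact_mod_cast this
  rw [abs_mul, abs_of_pos hpos] at hint
  have up : p + q * (2 * k + α) ≤ q * (2 * k + 3) := by nlinarith
  have : (n : ℝ) + 1 ≤ q * (2 * k + 3) := by
    have h1 : ((n : ℝ) + 1) * 1 ≤ (n + 1) * (|q * α - p| * (p + q * (2 * k + α))) := by gcongr
    have h2 : |q * α - p| * (n + 1) * (p + q * (2 * k + α)) ≤ 1 * (p + q * (2 * k + α)) := by gcongr
    linarith
  rw [div_le_iff₀ (by positivity)]
  linarith

lemma Rs_bound {k : ℕ} {α : ℝ} (h : Ctx k α) (n : ℕ) : ∀ z : ℝ, 1 ≤ n →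
    |Rs α n z| ≤ 5 * (1 + (2 * k + 3) * Real.log n) := by
  induction n using Nat.strong_induction_on with
  | _ n ih =>
    intro z hn
    obtain ⟨a, ha1, ha2⟩ := Real.exists_rat_abs_sub_le_and_den_le α (n := n) hn
    have hb := block α a n ha1 ha2
    have hd := den_large h a n ha1
    have hk := h.hkR
    have hlog : 0 ≤ Real.log n := Real.log_natCast_nonneg n
    rcases eq_or_ne a.den n with e | e
    · rw [← e]
      rw [← e] at hlog
      refine (hb z).trans ?_
      have : 0 ≤ (2 * k + 3) * Real.log a.den := by positivity
      linarith
    · obtain ⟨r, hr⟩ : ∃ r, n = a.den + r := ⟨n - a.den, by omega⟩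
      have d0 := a.den_pos
      have hr1 : 1 ≤ r := by omega
      have i1 := ih r (by omega) (z + a.den * α) hr1
      have hrR : (0 : ℝ) < r := by exact_mod_cast hr1
      have hnR : (0 : ℝ) < n := by exact_mod_cast hn
      have hl : Real.log r ≤ Real.log n - 1 / (2 * k + 3) := by
        have e1 : (r : ℝ) / n ≤ 1 - 1 / (2 * k + 3) := by
          have : (r : ℝ) = n - a.den := by rw [hr]; push_cast; ring
          rw [this, sub_div, div_self hnR.ne']
          have : 1 / (2 * (k : ℝ) + 3) ≤ a.den / n := by
            rw [le_div_iff₀ hnR]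
            calc _ = (n : ℝ) / (2 * k + 3) := by ring
              _ ≤ _ := hd
          linarith
        have e2 := Real.log_le_sub_one_of_pos (div_pos hrR hnR)
        rw [Real.log_div hrR.ne' hnR.ne'] at e2
        linarith
      have hl2 : (2 * (k : ℝ) + 3) * Real.log r ≤ (2 * k + 3) * Real.log n - 1 := by
        have : (2 * (k : ℝ) + 3) * Real.log r ≤ (2 * k + 3) * (Real.log n - 1 / (2 * k + 3)) := by
          gcongr
        refine this.trans (le_of_eq ?_)
        field_simp
      have split : Rs α n z = Rs α a.den z + Rs α r (z + a.den * α) := by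
        conv_lhs => rw [hr]
        exact Rs_add α _ _ z
      rw [split]
      refine (abs_add_le _ _).trans ?_
      have := hb z
      linarith

lemma ddisc_eq (α β : ℝ) (h0 : 0 < β) (h1 : β < 1) (n : ℕ) :
    ddisc α β n = Rs α n (-β) - Rs α n 0 := by
  unfold ddisc Rs
  rw [← Finset.sum_sub_distrib]
  have : ∀ r ∈ Finset.range n, (Int.fract (-β + r * α) - 1 / 2 - (Int.fract (0 + r * α) - 1 / 2)) =
      (if Int.fract ((r : ℝ) * α) < β then (1 : ℝ) else 0) - β := by
    intro r _
    rw [zero_add]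
    obtain ⟨y, hy⟩ : ∃ y, y = (r : ℝ) * α := ⟨_, rfl⟩
    rw [← hy]
    have f0 := Int.fract_nonneg y
    have f1 := Int.fract_lt_one y
    have ef : y = ⌊y⌋ + Int.fract y := (Int.floor_add_fract y).symm
    split_ifs with c
    · have : Int.fract (-β + y) = Int.fract y - β + 1 := by
        rw [Int.fract_eq_iff]
        refine ⟨by linarith, by linarith, ⌊y⌋ - 1, ?_⟩
        push_cast; linarith
      rw [this]; ring
    · have : Int.fract (-β + y) = Int.fract y - β := by
        rw [Int.fract_eq_iff]
        refine ⟨by linarith, by linarith, ⌊y⌋, ?_⟩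
        linarith
      rw [this]; ring
  rw [Finset.sum_congr rfl this, Finset.sum_sub_distrib]
  simp; ring

lemma ddisc_bound {k : ℕ} {α : ℝ} (h : Ctx k α) (n : ℕ) (hn : 1 ≤ n) (β : ℝ) (h0 : 0 < β)
    (h1 : β < 1) : |ddisc α β n| ≤ 10 * (1 + (2 * k + 3) * Real.log n) := by
  rw [ddisc_eq α β h0 h1]
  have a := Rs_bound h n (-β) hn
  have b := Rs_bound h n 0 hn
  rw [abs_le] at *
  constructor <;> linarith [a.1, a.2, b.1, b.2]

lemma nDsup_bdd {k : ℕ} {α : ℝ} (h : Ctx k α) (n : ℕ) (hn : 1 ≤ n) :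
    BddAbove ((fun β => |ddisc α β n|) '' Set.Ioo (0 : ℝ) 1) := by
  refine ⟨10 * (1 + (2 * k + 3) * Real.log n), ?_⟩
  rintro _ ⟨β, hβ, rfl⟩
  exact ddisc_bound h n hn β hβ.1 hβ.2

lemma nDsup_le {k : ℕ} {α : ℝ} (h : Ctx k α) (n : ℕ) (hn : 1 ≤ n) :
    nDsup α n ≤ 10 * (1 + (2 * k + 3) * Real.log n) := by
  apply csSup_le
  · exact (Set.nonempty_Ioo.2 one_pos).image _
  · rintro _ ⟨β, hβ, rfl⟩
    exact ddisc_bound h n hn β hβ.1 hβ.2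

lemma int_ind (f : ℝ) (h0 : 0 ≤ f) (h1 : f < 1) :
    IntervalIntegrable (fun β : ℝ => if f < β then (1 : ℝ) else 0) MeasureTheory.volume 0 1 ∧
    ∫ β in (0 : ℝ)..1, (if f < β then (1 : ℝ) else 0) = 1 - f := by
  have mono : Monotone (fun β : ℝ => if f < β then (1 : ℝ) else 0) := by
    intro a b hab
    dsimp only
    split_ifs <;> first | linarith | norm_num
  have ii : ∀ a b, IntervalIntegrable (fun β : ℝ => if f < β then (1 : ℝ) else 0)
      MeasureTheory.volume a b := fun a b => (mono.monotoneOn _).intervalIntegrable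
  refine ⟨ii _ _, ?_⟩
  rw [← intervalIntegral.integral_add_adjacent_intervals (ii 0 f) (ii f 1)]
  have a1 : ∫ β in (0 : ℝ)..f, (if f < β then (1 : ℝ) else 0) = ∫ β in (0 : ℝ)..f, (0 : ℝ) := by
    apply intervalIntegral.integral_congr
    intro x hx
    rw [Set.uIcc_of_le h0] at hx
    dsimp only
    rw [if_neg (not_lt.2 hx.2)]
  have a2 : ∫ β in f..1, (if f < β then (1 : ℝ) else 0) = ∫ β in f..1, (1 : ℝ) := by
    apply intervalIntegral.integral_congr_ae
    refine Filter.Eventually.of_forall ?_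
    intro x hx
    rw [Set.uIoc_of_le h1.le] at hx
    rw [if_pos hx.1]
  rw [a1, a2]; simp

lemma nDsup_ge {k : ℕ} {α : ℝ} (h : Ctx k α) (n : ℕ) : Tn α n ≤ nDsup α (n + 1) := by
  have hint : IntervalIntegrable (fun β => ddisc α β (n + 1)) MeasureTheory.volume 0 1 ∧
      ∫ β in (0 : ℝ)..1, ddisc α β (n + 1) = - Tn α n := by
    have e1 : ∀ r ∈ Finset.range (n + 1), IntervalIntegrable
        (fun β => if Int.fract ((r : ℝ) * α) < β then (1 : ℝ) else 0) MeasureTheory.volume 0 1 :=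
      fun r _ => (int_ind _ (Int.fract_nonneg _) (Int.fract_lt_one _)).1
    have e2 : IntervalIntegrable (fun β : ℝ => ∑ r ∈ Finset.range (n + 1),
        if Int.fract ((r : ℝ) * α) < β then (1 : ℝ) else 0) MeasureTheory.volume 0 1 := by
      have := IntervalIntegrable.sum (Finset.range (n + 1)) e1
      have e : (fun β : ℝ => ∑ r ∈ Finset.range (n + 1),
          if Int.fract ((r : ℝ) * α) < β then (1 : ℝ) else 0) = ∑ r ∈ Finset.range (n + 1),
          fun β : ℝ => if Int.fract ((r : ℝ) * α) < β then (1 : ℝ) else 0 := by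
        funext β
        rw [Finset.sum_apply]
      rw [e]
      exact this
    have e3 : IntervalIntegrable (fun β : ℝ => β * ((n + 1 : ℕ) : ℝ)) MeasureTheory.volume 0 1 :=
      (Continuous.intervalIntegrable (by fun_prop) _ _)
    refine ⟨e2.sub e3, ?_⟩
    unfold ddisc
    rw [intervalIntegral.integral_sub e2 e3, intervalIntegral.integral_finsetSum e1]
    have e4 : ∀ r ∈ Finset.range (n + 1), ∫ β in (0 : ℝ)..1,
        (if Int.fract ((r : ℝ) * α) < β then (1 : ℝ) else 0) = 1 - r * α + (⌊(r : ℝ) * α⌋₊ : ℝ) := by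
      intro r _
      rw [(int_ind _ (Int.fract_nonneg _) (Int.fract_lt_one _)).2, Int.fract,
        natCast_floor_eq_intCast_floor (mul_nonneg (Nat.cast_nonneg _) h.pos.le)]
      ring
    rw [Finset.sum_congr rfl e4, Finset.sum_add_distrib, Finset.sum_sub_distrib, ← Finset.sum_mul]
    have : ∀ n : ℕ, ∑ b ∈ Finset.range (n + 1), (b : ℝ) = n * (n + 1) / 2 := by
      intro n
      induction n with
      | zero => simp
      | succ n ih => rw [Finset.sum_range_succ, ih]; push_cast; ring
    rw [this]
    unfold Tn Fs
    simp
    ring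
  have hle : ∫ β in (0 : ℝ)..1, (-nDsup α (n + 1)) ≤ ∫ β in (0 : ℝ)..1, ddisc α β (n + 1) := by
    apply intervalIntegral.integral_mono_on_of_le_Ioo zero_le_one (by simp) hint.1
    intro β hβ
    have : |ddisc α β (n + 1)| ≤ nDsup α (n + 1) :=
      le_csSup (nDsup_bdd h (n + 1) (by omega)) ⟨β, hβ, rfl⟩
    exact (abs_le.1 this).1
  rw [hint.2] at hle
  simp at hle
  linarith


lemma gaussIter_props (α : ℝ) (hirr : Irrational α) (h0 : 0 < α) (h1 : α < 1) (m : ℕ) :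
    Irrational (gaussIter α m) ∧ 0 < gaussIter α m ∧ gaussIter α m < 1 := by
  induction m with
  | zero => exact ⟨hirr, h0, h1⟩
  | succ m ih =>
    have e : gaussIter α (m + 1) = Int.fract (gaussIter α m)⁻¹ := by
      unfold gaussIter
      rw [Function.iterate_succ_apply']
      rfl
    rw [e]
    have hi : Irrational (Int.fract (gaussIter α m)⁻¹) := by
      rw [Int.fract]
      exact (irrational_inv_iff.2 ih.1).sub_intCast _
    refine ⟨hi, lt_of_le_of_ne (Int.fract_nonneg _) ?_, Int.fract_lt_one _⟩
    intro h
    exact hi.ne_zero h.symm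

lemma gaussIter_inv (α : ℝ) (hirr : Irrational α) (h0 : 0 < α) (h1 : α < 1) (m : ℕ) :
    (gaussIter α m)⁻¹ = pq α (m + 1) + gaussIter α (m + 1) := by
  have e : gaussIter α (m + 1) = Int.fract (gaussIter α m)⁻¹ := by
    unfold gaussIter
    rw [Function.iterate_succ_apply']
    rfl
  have p := (gaussIter_props α hirr h0 h1 m).2.1
  rw [e, pq, Nat.add_sub_cancel, natCast_floor_eq_intCast_floor (inv_nonneg.2 p.le)]
  exact (Int.floor_add_fract _).symm

lemma mkCtx (k : ℕ) (hk : 2 < k) (α : ℝ) (hirr : Irrational α)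
    (h0 : 0 < α) (h1 : α < 1)
    (ha : ∀ i : ℕ, pq α (2 * i + 1) = 2 ∧ pq α (2 * i + 2) = 2 * k) : Ctx k α := by
  refine ⟨hk, hirr, h0, ?_⟩
  have hkR : (3 : ℝ) ≤ k := by exact_mod_cast hk
  have hs := Real.sq_sqrt (show (0 : ℝ) ≤ k ^ 2 + k by positivity)
  obtain ⟨ξ, hξ⟩ : ∃ ξ, ξ = Real.sqrt (k ^ 2 + k) - k := ⟨_, rfl⟩
  have hξeq : ξ * (2 * k + ξ) = k := by rw [hξ]; linear_combination hs
  have hξ0 : 0 < ξ := by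
    rw [hξ, sub_pos]
    apply Real.lt_sqrt_of_sq_lt
    linarith
  have hξ1 : ξ < 1 := by nlinarith
  have step : ∀ m : ℕ, |gaussIter α (2 * m) - ξ| ≤ |gaussIter α (2 * (m + 1)) - ξ| / 4 := by
    intro m
    have e1 := gaussIter_inv α hirr h0 h1 (2 * m)
    have e2 := gaussIter_inv α hirr h0 h1 (2 * m + 1)
    rw [(ha m).1] at e1
    rw [(ha m).2] at e2
    obtain ⟨-, x0, x1⟩ := gaussIter_props α hirr h0 h1 (2 * m)
    obtain ⟨-, y0, y1⟩ := gaussIter_props α hirr h0 h1 (2 * m + 1)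
    obtain ⟨-, z0, z1⟩ := gaussIter_props α hirr h0 h1 (2 * (m + 1))
    change (gaussIter α (2 * m + 1))⁻¹ = _ + gaussIter α (2 * (m + 1)) at e2
    generalize gaussIter α (2 * m) = x at *
    generalize gaussIter α (2 * m + 1) = y at *
    generalize gaussIter α (2 * (m + 1)) = z at *
    push_cast at e1 e2
    have f1 : x * (2 + y) = 1 := by rw [← e1]; exact mul_inv_cancel₀ x0.ne'
    have f2 : y * (2 * k + z) = 1 := by rw [← e2]; exact mul_inv_cancel₀ y0.ne'
    have f3 : x * (4 * k + 2 * z + 1) = 2 * k + z := by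
      linear_combination (2 * k + z) * f1 - x * f2
    have f4 : (x - ξ) * ((4 * k + 2 * z + 1) * (4 * k + 2 * ξ + 1)) = z - ξ := by
      linear_combination (4 * k + 2 * ξ + 1) * f3 - (4 * k + 2 * z + 1) * 2 * hξeq
    have f5 : (4 : ℝ) ≤ (4 * k + 2 * z + 1) * (4 * k + 2 * ξ + 1) := by nlinarith
    rw [← f4, abs_mul, abs_of_pos (by linarith : (0 : ℝ) < (4 * k + 2 * z + 1) * (4 * k + 2 * ξ + 1))]
    have := abs_nonneg (x - ξ)
    rw [le_div_iff₀ (by norm_num)]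
    gcongr
  have all : ∀ m : ℕ, |α - ξ| ≤ (1 / 4) ^ m * |gaussIter α (2 * m) - ξ| := by
    intro m
    induction m with
    | zero => simp [gaussIter]
    | succ m ih =>
      refine ih.trans ?_
      calc _ ≤ (1 / 4 : ℝ) ^ m * (|gaussIter α (2 * (m + 1)) - ξ| / 4) := by
            gcongr; exact step m
        _ = _ := by ring
  have all2 : ∀ m : ℕ, |α - ξ| ≤ (1 / 4 : ℝ) ^ m := by
    intro m
    refine (all m).trans ?_
    obtain ⟨-, z0, z1⟩ := gaussIter_props α hirr h0 h1 (2 * m)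
    have : |gaussIter α (2 * m) - ξ| ≤ 1 := by rw [abs_le]; constructor <;> linarith
    exact mul_le_of_le_one_right (by positivity) this
  have lim : |α - ξ| ≤ 0 := ge_of_tendsto'
    (tendsto_pow_atTop_nhds_zero_of_lt_one (r := (1 / 4 : ℝ)) (by norm_num) (by norm_num)) all2
  have : α = ξ := by
    have := abs_nonpos_iff.1 lim
    linarith
  rw [this]; exact hξeq

lemma limsup_half {k : ℕ} {α : ℝ} (h : Ctx k α) :
    Filter.limsup (fun n : ℕ => |ddisc α (1 / 2) n| / Real.log n) Filter.atTop ≤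
      0.505 / Real.log (lamb k α) := by
  have hL : 0 < Real.log (lamb k α) := Real.log_pos (by linarith [h.lam_gt])
  apply Filter.limsup_le_of_le
  · apply Filter.IsCoboundedUnder.of_frequently_ge (a := 0)
    apply Filter.Frequently.of_forall
    intro n
    exact div_nonneg (abs_nonneg _) (Real.log_natCast_nonneg n)
  · have t : Filter.Tendsto (fun n : ℕ => Real.log n) Filter.atTop Filter.atTop :=
      Real.tendsto_log_atTop.comp tendsto_natCast_atTop_atTop
    filter_upwards [t.eventually_ge_atTop (300 * Real.log (lamb k α)), Filter.eventually_ge_atTop 2]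
      with n h1 h2
    have hl : 0 < Real.log n := by linarith
    rw [div_le_iff₀ hl]
    refine (half_bound h n h2).trans ?_
    have e : Real.log n = (Real.log n / Real.log (lamb k α)) * Real.log (lamb k α) := by
      field_simp
    have : 300 ≤ Real.log n / Real.log (lamb k α) := by rwa [le_div_iff₀ hL]
    have e3 : 0.505 / Real.log (lamb k α) * Real.log n =
      0.505 * (Real.log n / Real.log (lamb k α)) := by ring
    rw [e3]
    linarith

lemma limsup_disc {k : ℕ} {α : ℝ} (h : Ctx k α) :
    0.51 / Real.log (lamb k α) ≤
      Filter.limsup (fun n : ℕ => nDsup α n / Real.log n) Filter.atTop := by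
  have hL : 0 < Real.log (lamb k α) := Real.log_pos (by linarith [h.lam_gt])
  have hk := h.hkR
  apply Filter.le_limsup_of_frequently_le
  · rw [Filter.frequently_atTop]
    intro M
    obtain ⟨n, h1, h2, h3⟩ := Tn_seq h (M + 50)
    refine ⟨n + 1, by omega, ?_⟩
    have g := nDsup_ge h n
    have n2 : (1 : ℝ) < ((n + 1 : ℕ) : ℝ) := by
      exact_mod_cast (by omega : 1 < n + 1)
    have hl : 0 < Real.log ((n + 1 : ℕ) : ℝ) := Real.log_pos n2
    have hl2 : Real.log ((n + 1 : ℕ) : ℝ) ≤ ((M + 50 : ℕ) : ℝ) * Real.log (lamb k α) := by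
      rw [← Real.log_pow]
      apply Real.log_le_log (by linarith)
      push_cast; exact h2
    rw [le_div_iff₀ hl]
    refine le_trans ?_ g
    refine le_trans ?_ h3
    have : 0.51 / Real.log (lamb k α) * Real.log ((n + 1 : ℕ) : ℝ) ≤
        0.51 / Real.log (lamb k α) * (((M + 50 : ℕ) : ℝ) * Real.log (lamb k α)) := by
      gcongr
    refine this.trans ?_
    have e : 0.51 / Real.log (lamb k α) * (((M + 50 : ℕ) : ℝ) * Real.log (lamb k α)) =
        0.51 * ((M + 50 : ℕ) : ℝ) := by field_simp
    rw [e]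
    push_cast
    have : (0 : ℝ) ≤ M := Nat.cast_nonneg _
    linarith
  · refine Filter.isBoundedUnder_of_eventually_le (a := 10 * (1 + (2 * (k : ℝ) + 3))) ?_
    have t : Filter.Tendsto (fun n : ℕ => Real.log n) Filter.atTop Filter.atTop :=
      Real.tendsto_log_atTop.comp tendsto_natCast_atTop_atTop
    filter_upwards [t.eventually_ge_atTop 1, Filter.eventually_ge_atTop 1] with n h1 h2
    rw [div_le_iff₀ (by linarith)]
    refine (nDsup_le h n h2).trans ?_
    nlinarith


/-- for the quadratic irrational `α` with `a_{2i-1} = 2` and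
`a_{2i} = 2k` (`k > 2` fixed), one has
`limsup_n n D_n^*(α)/log n > limsup_n |d_n(α, 1/2)|/log n`. -/
theorem boris_counterexample (k : ℕ) (hk : 2 < k) (α : ℝ) (hirr : Irrational α)
    (h0 : 0 < α) (h1 : α < 1)
    (ha : ∀ i : ℕ, pq α (2 * i + 1) = 2 ∧ pq α (2 * i + 2) = 2 * k) :
    Filter.limsup (fun n : ℕ => |ddisc α (1 / 2) n| / Real.log n) Filter.atTop <
      Filter.limsup (fun n : ℕ => nDsup α n / Real.log n) Filter.atTop := by
  have h := mkCtx k hk α hirr h0 h1 ha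
  have hL : 0 < Real.log (lamb k α) := Real.log_pos (by linarith [h.lam_gt])
  refine (limsup_half h).trans_lt (lt_of_lt_of_le ?_ (limsup_disc h))
  apply div_lt_div_of_pos_right _ hL
  norm_num
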